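/- arXiv:2604.22752 — 5 statements merged into one kernel-verified Lean document; each statement's English description precedes it below -/
import Mathlib

section
/- Let Ω be a measurable space, B a probability measure on Ω, d a natural number, t : Ω → (Fin d → ℝ) a measurable map, and η ∈ (Fin d → ℝ). Assume the function x ↦ exp(⟨η, t(x)⟩) is integrable with respect to B and its integral Z = ∫ exp(⟨η, t(x)⟩) dB(x) is positive, and let P be the probability measure with density x ↦ exp(⟨η, t(x)⟩)/Z with respect to B (the exponential family member with base B, canonical statistic t and canonical parameter η). Suppose t is integrable with respect to P. If Q is any probability measure on Ω that is absolutely continuous with respect to B, such that t is integrable with respect to Q and ∫ t dQ = ∫ t dP, then KL(P‖B) ≤ KL(Q‖B). -/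
/-!
By Gibbs' inequality applied to `μ` and the tilted measure `ν.tilted f`, every probability measure
`μ` satisfies the Donsker–Varadhan bound `∫ f ∂μ - log ∫ exp f ∂ν ≤ KL(μ‖ν)`, and `ν.tilted f`
itself attains equality. Among measures giving `f` at least the mean it has under `ν.tilted f`, the
divergence from `ν` is therefore minimal at `ν.tilted f`. An exponential family member is the tilt
of its base by a linear functional of the canonical statistic, so the mean of the statistic
determines the mean of `f`.
-/

open MeasureTheory Real
open scoped Classical

/-- Kullback–Leibler divergence of `Q` with respect to `P`:
`∫ log(dQ/dP) dQ` if `Q ≪ P` and the integrand is `Q`-integrable, `+∞` otherwise. -/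
noncomputable def klDiv {Ω : Type*} [MeasurableSpace Ω] (Q P : Measure Ω) : EReal :=
  if Q ≪ P ∧ Integrable (fun x => Real.log (Q.rnDeriv P x).toReal) Q
    then ((∫ x, Real.log (Q.rnDeriv P x).toReal ∂Q : ℝ) : EReal)
    else ⊤

section Tilted

variable {Ω : Type*} [MeasurableSpace Ω] {μ ν : Measure Ω} {f : Ω → ℝ}

theorem klDiv_of_ac_of_integrable (hμν : μ ≪ ν) (hllr : Integrable (llr μ ν) μ) :
    klDiv μ ν = ((∫ x, llr μ ν x ∂μ : ℝ) : EReal) :=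
  if_pos ⟨hμν, hllr⟩

theorem le_klDiv_of_le_integral_llr {a : EReal}
    (h : μ ≪ ν → Integrable (llr μ ν) μ → a ≤ ((∫ x, llr μ ν x ∂μ : ℝ) : EReal)) :
    a ≤ klDiv μ ν := by
  rw [klDiv]
  split_ifs with hμν
  · exact h hμν.1 hμν.2
  · exact le_top

theorem integral_llr_nonneg [IsProbabilityMeasure μ] [IsProbabilityMeasure ν]
    (hμν : μ ≪ ν) (hllr : Integrable (llr μ ν) μ) : 0 ≤ ∫ x, llr μ ν x ∂μ := by
  simpa using InformationTheory.integral_llr_add_sub_measure_univ_nonneg hμν hllr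

theorem integral_sub_log_integral_exp_le_integral_llr [IsProbabilityMeasure μ] [SigmaFinite ν]
    (hμν : μ ≪ ν) (hllr : Integrable (llr μ ν) μ) (hfμ : Integrable f μ)
    (hfν : Integrable (fun x ↦ exp (f x)) ν) :
    ∫ x, f x ∂μ - log (∫ x, exp (f x) ∂ν) ≤ ∫ x, llr μ ν x ∂μ := by
  have : NeZero ν := ⟨fun hν ↦ IsProbabilityMeasure.ne_zero μ <|
    Measure.absolutelyContinuous_zero_iff.mp (hν ▸ hμν)⟩
  have : IsProbabilityMeasure (ν.tilted f) := isProbabilityMeasure_tilted hfν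
  have gibbs : 0 ≤ ∫ x, llr μ (ν.tilted f) x ∂μ :=
    integral_llr_nonneg (hμν.trans (absolutelyContinuous_tilted hfν))
      (integrable_llr_tilted_right hμν hfμ hllr hfν)
  rw [integral_llr_tilted_right hμν hfμ hfν hllr] at gibbs
  linarith

theorem integral_sub_log_integral_exp_le_klDiv [IsProbabilityMeasure μ] [SigmaFinite ν]
    (hfμ : Integrable f μ) (hfν : Integrable (fun x ↦ exp (f x)) ν) :
    ((∫ x, f x ∂μ - log (∫ x, exp (f x) ∂ν) : ℝ) : EReal) ≤ klDiv μ ν :=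
  le_klDiv_of_le_integral_llr fun hμν hllr ↦ EReal.coe_le_coe_iff.mpr <|
    integral_sub_log_integral_exp_le_integral_llr hμν hllr hfμ hfν

theorem klDiv_tilted_self [SigmaFinite ν] [NeZero ν] (hfν : Integrable (fun x ↦ exp (f x)) ν)
    (hf : Integrable f (ν.tilted f)) :
    klDiv (ν.tilted f) ν =
      ((∫ x, f x ∂(ν.tilted f) - log (∫ x, exp (f x) ∂ν) : ℝ) : EReal) := by
  have : IsProbabilityMeasure (ν.tilted f) := isProbabilityMeasure_tilted hfν
  have hac : ν.tilted f ≪ ν := tilted_absolutelyContinuous ν f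
  have hllr : llr (ν.tilted f) ν =ᵐ[ν.tilted f] fun x ↦ f x - log (∫ y, exp (f y) ∂ν) :=
    hac.ae_le (log_rnDeriv_tilted_left_self hfν)
  have hllr_int : Integrable (llr (ν.tilted f) ν) (ν.tilted f) :=
    (hf.sub (integrable_const _)).congr hllr.symm
  rw [klDiv_of_ac_of_integrable hac hllr_int, integral_congr_ae hllr,
    integral_sub hf (integrable_const _), integral_const, probReal_univ, one_smul]

theorem klDiv_tilted_self_le_klDiv [IsProbabilityMeasure μ] [SigmaFinite ν] [NeZero ν]
    (hfν : Integrable (fun x ↦ exp (f x)) ν) (hf : Integrable f (ν.tilted f))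
    (hfμ : Integrable f μ) (hmean : ∫ x, f x ∂(ν.tilted f) ≤ ∫ x, f x ∂μ) :
    klDiv (ν.tilted f) ν ≤ klDiv μ ν :=
  calc klDiv (ν.tilted f) ν
      = ((∫ x, f x ∂(ν.tilted f) - log (∫ x, exp (f x) ∂ν) : ℝ) : EReal) :=
        klDiv_tilted_self hfν hf
    _ ≤ ((∫ x, f x ∂μ - log (∫ x, exp (f x) ∂ν) : ℝ) : EReal) :=
        EReal.coe_le_coe_iff.mpr (sub_le_sub_right hmean _)
    _ ≤ klDiv μ ν := integral_sub_log_integral_exp_le_klDiv hfμ hfν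

end Tilted

theorem expFamily_maximises_entropy_with_prior_general
    {Ω E : Type*} [MeasurableSpace Ω] [NormedAddCommGroup E] [NormedSpace ℝ E] [CompleteSpace E]
    {B Q : Measure Ω} [SigmaFinite B] [NeZero B] [IsProbabilityMeasure Q]
    {t : Ω → E} (η : StrongDual ℝ E) (hint : Integrable (fun x ↦ exp (η (t x))) B)
    (htP : Integrable t (B.tilted fun x ↦ η (t x))) (htQ : Integrable t Q)
    (hmean : η (∫ x, t x ∂(B.tilted fun x ↦ η (t x))) ≤ η (∫ x, t x ∂Q)) :
    klDiv (B.tilted fun x ↦ η (t x)) B ≤ klDiv Q B := by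
  rw [← η.integral_comp_comm htP, ← η.integral_comp_comm htQ] at hmean
  exact klDiv_tilted_self_le_klDiv hint (η.integrable_comp htP) (η.integrable_comp htQ) hmean

/-- The exponential family member `P` with base `B`, canonical statistic `t` and canonical
parameter `η` maximises entropy with prior measure `B` (i.e. minimises `klDiv · B`) among
all probability measures `Q ≪ B` with the prescribed expectation of `t`. -/
theorem expFamily_maximises_entropy_with_prior
    {Ω : Type*} [MeasurableSpace Ω] (B : Measure Ω) [IsProbabilityMeasure B]
    (d : ℕ) (t : Ω → (Fin d → ℝ)) (ht : Measurable t) (η : Fin d → ℝ)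
    (hint : Integrable (fun x => Real.exp (∑ i, η i * t x i)) B)
    (Z : ℝ) (hZ : Z = ∫ x, Real.exp (∑ i, η i * t x i) ∂B) (hZpos : 0 < Z)
    (P : Measure Ω)
    (hP : P = B.withDensity (fun x => ENNReal.ofReal (Real.exp (∑ i, η i * t x i) / Z)))
    (hPprob : IsProbabilityMeasure P)
    (htP : Integrable t P)
    (Q : Measure Ω) [IsProbabilityMeasure Q] (hQB : Q ≪ B)
    (htQ : Integrable t Q)
    (hmean : ∫ x, t x ∂Q = ∫ x, t x ∂P) :
    klDiv P B ≤ klDiv Q B := by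
  subst hZ hP
  exact expFamily_maximises_entropy_with_prior_general
    (dotProductBilin ℝ ℝ η).toContinuousLinearMap hint htP htQ (congrArg _ hmean).ge
end

section
/- Let Ω be a measurable space, B a probability measure on Ω, d a natural number, t : Ω → (Fin d → ℝ) measurable, and η ∈ (Fin d → ℝ). Assume x ↦ exp(⟨η, t(x)⟩) is integrable with respect to B with positive integral Z, and let P be the probability measure with density x ↦ exp(⟨η, t(x)⟩)/Z with respect to B; suppose t is integrable with respect to P. Let Q be a probability measure with Q ≪ B, KL(Q‖B) < ∞, t integrable with respect to Q, and ∫ t dQ = ∫ t dP. Then KL(Q‖P) = KL(Q‖B) − KL(P‖B). -/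
open MeasureTheory Real
open scoped Classical

/-!
For `P = B.tilted f` the chain rule for densities gives `log (dQ/dP) = log (dQ/dB) - f + log Z`, so
`KL(Q‖P) = KL(Q‖B) - (∫ f dQ - log Z)`, also when both divergences are infinite. Taking `Q = P`
identifies `KL(P‖B)` with `∫ f dP - log Z`, and the moment constraint makes the two corrections
agree.
-/

section KullbackLeibler

variable {Ω : Type*} [MeasurableSpace Ω] {Q P : Measure Ω}

theorem klDiv_of_ac_of_integrable_s2 (hac : Q ≪ P) (hint : Integrable (llr Q P) Q) :
    klDiv Q P = ((∫ x, llr Q P x ∂Q : ℝ) : EReal) :=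
  if_pos ⟨hac, hint⟩

theorem klDiv_of_not_ac_and_integrable (h : ¬(Q ≪ P ∧ Integrable (llr Q P) Q)) :
    klDiv Q P = ⊤ :=
  if_neg h

theorem klDiv_self (P : Measure Ω) [SigmaFinite P] : klDiv P P = 0 := by
  have hint : Integrable (llr P P) P := (integrable_congr (llr_self P)).2 (integrable_zero _ _ P)
  rw [klDiv_of_ac_of_integrable_s2 .rfl hint, integral_congr_ae (llr_self P)]
  simp

end KullbackLeibler

section Tilted

variable {Ω : Type*} [MeasurableSpace Ω] {Q B : Measure Ω} {f : Ω → ℝ}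

theorem absolutelyContinuous_tilted_right_iff (hexp : Integrable (fun x => exp (f x)) B) :
    Q ≪ B.tilted f ↔ Q ≪ B :=
  ⟨fun h => h.trans (tilted_absolutelyContinuous B f),
    fun h => h.trans (absolutelyContinuous_tilted hexp)⟩

theorem integrable_llr_tilted_right_iff [IsFiniteMeasure Q] [SigmaFinite B] (hQB : Q ≪ B)
    (hfQ : Integrable f Q) (hexp : Integrable (fun x => exp (f x)) B) :
    Integrable (llr Q (B.tilted f)) Q ↔ Integrable (llr Q B) Q := by
  rw [integrable_congr (llr_tilted_right hQB hexp)]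
  exact integrable_add_iff_integrable_right (hfQ.neg.add (integrable_const _))

theorem klDiv_tilted_right [IsProbabilityMeasure Q] [SigmaFinite B]
    (hfQ : Integrable f Q) (hexp : Integrable (fun x => exp (f x)) B) :
    klDiv Q (B.tilted f) =
      klDiv Q B - ((∫ x, f x ∂Q - log (∫ x, exp (f x) ∂B) : ℝ) : EReal) := by
  have hiff : Q ≪ B.tilted f ∧ Integrable (llr Q (B.tilted f)) Q ↔
      Q ≪ B ∧ Integrable (llr Q B) Q := by
    rw [absolutelyContinuous_tilted_right_iff hexp]
    exact and_congr_right fun hQB => integrable_llr_tilted_right_iff hQB hfQ hexp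
  by_cases h : Q ≪ B ∧ Integrable (llr Q B) Q
  · obtain ⟨hac, hint⟩ := hiff.2 h
    rw [klDiv_of_ac_of_integrable_s2 hac hint, klDiv_of_ac_of_integrable_s2 h.1 h.2,
      integral_llr_tilted_right h.1 hfQ hexp h.2, ← EReal.coe_sub, sub_sub_eq_add_sub,
      add_sub_right_comm]
  · rw [klDiv_of_not_ac_and_integrable h, klDiv_of_not_ac_and_integrable (mt hiff.1 h),
      EReal.top_sub_coe]

theorem klDiv_tilted_left_self [SigmaFinite B] [NeZero B]
    (hf : Integrable f (B.tilted f)) (hexp : Integrable (fun x => exp (f x)) B) :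
    klDiv (B.tilted f) B =
      ((∫ x, f x ∂(B.tilted f) - log (∫ x, exp (f x) ∂B) : ℝ) : EReal) := by
  have := isProbabilityMeasure_tilted hexp
  have hzero := klDiv_tilted_right hf hexp
  rw [klDiv_self] at hzero
  rw [← EReal.sub_add_cancel (a := klDiv (B.tilted f) B), ← hzero, zero_add]

end Tilted

theorem klDiv_expFamily_identity_general {Ω E : Type*} [MeasurableSpace Ω]
    [NormedAddCommGroup E] [NormedSpace ℝ E] [CompleteSpace E]
    {B Q : Measure Ω} [SigmaFinite B] [NeZero B] [IsProbabilityMeasure Q]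
    {t : Ω → E} (η : StrongDual ℝ E) (hexp : Integrable (fun x => exp (η (t x))) B)
    (htP : Integrable t (B.tilted fun x => η (t x))) (htQ : Integrable t Q)
    (hmean : ∫ x, t x ∂Q = ∫ x, t x ∂(B.tilted fun x => η (t x))) :
    klDiv Q (B.tilted fun x => η (t x)) =
      klDiv Q B - klDiv (B.tilted fun x => η (t x)) B := by
  rw [klDiv_tilted_right (η.integrable_comp htQ) hexp,
    klDiv_tilted_left_self (η.integrable_comp htP) hexp,
    η.integral_comp_comm htQ, η.integral_comp_comm htP, hmean]

/-- The key identity in the maximum-entropy derivation of exponential families: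
`KL(Q‖P) = KL(Q‖B) − KL(P‖B)` for any probability measure `Q ≪ B` with finite
`KL(Q‖B)` satisfying the moment constraint `∫ t dQ = ∫ t dP`. -/
theorem klDiv_expFamily_identity
    {Ω : Type*} [MeasurableSpace Ω] (B : Measure Ω) [IsProbabilityMeasure B]
    (d : ℕ) (t : Ω → (Fin d → ℝ)) (ht : Measurable t) (η : Fin d → ℝ)
    (hint : Integrable (fun x => Real.exp (∑ i, η i * t x i)) B)
    (Z : ℝ) (hZ : Z = ∫ x, Real.exp (∑ i, η i * t x i) ∂B) (hZpos : 0 < Z)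
    (P : Measure Ω)
    (hP : P = B.withDensity (fun x => ENNReal.ofReal (Real.exp (∑ i, η i * t x i) / Z)))
    (hPprob : IsProbabilityMeasure P)
    (htP : Integrable t P)
    (Q : Measure Ω) [IsProbabilityMeasure Q] (hQB : Q ≪ B)
    (hfin : klDiv Q B < ⊤)
    (htQ : Integrable t Q)
    (hmean : ∫ x, t x ∂Q = ∫ x, t x ∂P) :
    klDiv Q P = klDiv Q B - klDiv P B := by
  subst hZ hP
  exact klDiv_expFamily_identity_general (dotProductEquiv ℝ (Fin d) η).toContinuousLinearMap
    hint htP htQ hmean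
end

section
/- Let K be a nonempty finite type, d a natural number, t : K → (Fin d → ℝ), and η ∈ (Fin d → ℝ). Define the exponential family probability mass function with uniform base p : K → ℝ by p(x) = exp(⟨η, t(x)⟩) / ∑_{y ∈ K} exp(⟨η, t(y)⟩). Let q : K → ℝ satisfy q(x) ≥ 0 for all x, ∑_{x} q(x) = 1, and ∑_{x} q(x) • t(x) = ∑_{x} p(x) • t(x). Then the Shannon entropy satisfies −∑_{x} q(x) log q(x) ≤ −∑_{x} p(x) log p(x), where 0·log 0 is interpreted as 0. -/
open Real

/-! Gibbs' inequality bounds the entropy of `q` by its cross entropy `-∑ x, q x * log (p x)`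
relative to `p`. Since `log p` is an affine function of the statistic, this cross entropy depends on
`q` only through the expectation of the statistic, so matching expectations turn it into the entropy
of `p`. -/

lemma negMulLog_le_neg_mul_log_add_sub {x y : ℝ} (hx : 0 ≤ x) (hy : 0 < y) :
    negMulLog x ≤ -(x * log y) + (y - x) :=
  calc negMulLog x
      = negMulLog (y * (x / y)) := by rw [mul_div_cancel₀ _ hy.ne']
    _ = -(x * log y) + y * negMulLog (x / y) := by
        rw [negMulLog_mul, negMulLog]
        field_simp
    _ ≤ -(x * log y) + y * (1 - x / y) := by
        gcongr
        exact negMulLog_le_one_sub_self (div_nonneg hx hy.le)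
    _ = -(x * log y) + (y - x) := by field_simp

lemma sum_negMulLog_le_neg_sum_mul_log {ι : Type*} {s : Finset ι} {p q : ι → ℝ}
    (hp : ∀ i ∈ s, 0 < p i) (hq : ∀ i ∈ s, 0 ≤ q i) (hpq : ∑ i ∈ s, p i ≤ ∑ i ∈ s, q i) :
    ∑ i ∈ s, negMulLog (q i) ≤ -∑ i ∈ s, q i * log (p i) :=
  calc ∑ i ∈ s, negMulLog (q i)
      ≤ ∑ i ∈ s, (-(q i * log (p i)) + (p i - q i)) :=
        Finset.sum_le_sum fun i hi => negMulLog_le_neg_mul_log_add_sub (hq i hi) (hp i hi)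
    _ = -∑ i ∈ s, q i * log (p i) + (∑ i ∈ s, p i - ∑ i ∈ s, q i) := by
        rw [Finset.sum_add_distrib, Finset.sum_neg_distrib, Finset.sum_sub_distrib]
    _ ≤ -∑ i ∈ s, q i * log (p i) := by linarith

lemma sum_mul_dotProduct {K ι R : Type*} [Fintype K] [Fintype ι] [CommSemiring R]
    (q : K → R) (v : ι → R) (t : K → ι → R) :
    ∑ x, q x * (v ⬝ᵥ t x) = v ⬝ᵥ ∑ x, q x • t x := by
  simp only [dotProduct_sum, dotProduct_smul, smul_eq_mul]

section Gibbs

variable {K : Type*} [Fintype K]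

/-- The Gibbs probability mass function on a finite type with weights proportional to `exp (f x)`.
The exponential family with uniform base, statistic `t` and natural parameter `η` is the case
`f x = η ⬝ᵥ t x`. -/
noncomputable def gibbs (f : K → ℝ) (x : K) : ℝ := exp (f x) / ∑ y, exp (f y)

variable [Nonempty K] (f : K → ℝ)

lemma sum_exp_pos : 0 < ∑ x, exp (f x) :=
  Finset.sum_pos (fun x _ => exp_pos (f x)) Finset.univ_nonempty

lemma gibbs_pos (x : K) : 0 < gibbs f x :=
  div_pos (exp_pos (f x)) (sum_exp_pos f)

lemma sum_gibbs : ∑ x, gibbs f x = 1 := by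
  simp only [gibbs, ← Finset.sum_div, div_self (sum_exp_pos f).ne']

lemma log_gibbs (x : K) : log (gibbs f x) = f x - log (∑ y, exp (f y)) := by
  rw [gibbs, log_div (exp_ne_zero _) (sum_exp_pos f).ne', log_exp]

lemma sum_mul_log_gibbs {q : K → ℝ} (hq : ∑ x, q x = 1) :
    ∑ x, q x * log (gibbs f x) = ∑ x, q x * f x - log (∑ x, exp (f x)) := by
  simp only [log_gibbs, mul_sub, Finset.sum_sub_distrib, ← Finset.sum_mul, hq, one_mul]

theorem efu_maximises_shannon_entropy_general {q : K → ℝ} (hq0 : ∀ x, 0 ≤ q x)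
    (hq1 : ∑ x, q x = 1) (hmean : ∑ x, gibbs f x * f x ≤ ∑ x, q x * f x) :
    ∑ x, negMulLog (q x) ≤ ∑ x, negMulLog (gibbs f x) :=
  calc ∑ x, negMulLog (q x)
      ≤ -∑ x, q x * log (gibbs f x) :=
        sum_negMulLog_le_neg_sum_mul_log (fun x _ => gibbs_pos f x) (fun x _ => hq0 x)
          ((sum_gibbs f).trans hq1.symm).le
    _ ≤ -∑ x, gibbs f x * log (gibbs f x) := by
        rw [sum_mul_log_gibbs f hq1, sum_mul_log_gibbs f (sum_gibbs f)]
        linarith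
    _ = ∑ x, negMulLog (gibbs f x) := by
        simp only [negMulLog, neg_mul, Finset.sum_neg_distrib]

end Gibbs

/-- The exponential family with uniform base and canonical statistic `t` maximises
Shannon entropy among all probability mass functions with the same expectation of `t`. -/
theorem efu_maximises_shannon_entropy
    {K : Type*} [Fintype K] [Nonempty K]
    (d : ℕ) (t : K → (Fin d → ℝ)) (η : Fin d → ℝ)
    (p : K → ℝ)
    (hp : p = fun x => Real.exp (∑ i, η i * t x i) / ∑ y, Real.exp (∑ i, η i * t y i))
    (q : K → ℝ) (hq0 : ∀ x, 0 ≤ q x) (hq1 : ∑ x, q x = 1)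
    (hmom : ∑ x, q x • t x = ∑ x, p x • t x) :
    ∑ x, Real.negMulLog (q x) ≤ ∑ x, Real.negMulLog (p x) := by
  obtain rfl : p = gibbs fun x => η ⬝ᵥ t x := hp
  exact efu_maximises_shannon_entropy_general _ hq0 hq1 <| by
    simp only [sum_mul_dotProduct, hmom, le_refl]
end

section
/- Let S be a measurable subset of ℝ, d a natural number, t : ℝ → (Fin d → ℝ) measurable, and η ∈ (Fin d → ℝ). Assume the function x ↦ exp(⟨η, t(x)⟩) restricted to S is integrable with respect to Lebesgue measure with positive integral Z, and define the density p(x) = (indicator of S at x) · exp(⟨η, t(x)⟩)/Z. Let q : ℝ → ℝ be a nonnegative measurable function with ∫ q dλ = 1 and q(x) = 0 for almost every x outside S, such that t·q and t·p are integrable with ∫ t(x) q(x) dx = ∫ t(x) p(x) dx, and such that x ↦ q(x) log q(x) and x ↦ p(x) log p(x) are integrable. Then the differential entropies satisfy −∫ q(x) log q(x) dx ≤ −∫ p(x) log p(x) dx, where 0·log 0 is interpreted as 0. -/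
open MeasureTheory Real

/-!
Among probability densities `q`, the cross-entropy `-∫ q log p` of `q` relative to a fixed `p` is at
least the entropy of `q` (Gibbs' inequality, from `log y ≤ y - 1`). If `p` is a member of an
exponential family with uniform base on `S`, then `log p` is affine in the canonical statistic on
`S`, so `∫ q log p` depends on `q` only through the expectation of that statistic. When the
expectations under `q` and `p` agree, the cross-entropy is therefore the entropy of `p`.
-/

theorem mul_log_le_mul_log_self_add_sub {a b : ℝ} (ha : 0 ≤ a) (hb : 0 ≤ b)
    (hab : b = 0 → a = 0) : a * log b ≤ a * log a + (b - a) := by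
  rcases ha.eq_or_lt with rfl | ha
  · simpa using hb
  have hb : 0 < b := hb.lt_of_ne' fun h => ha.ne' (hab h)
  calc a * log b = a * log a + a * log (b / a) := by rw [log_div hb.ne' ha.ne']; ring
    _ ≤ a * log a + a * (b / a - 1) := by gcongr; exact log_le_sub_one_of_pos (div_pos hb ha)
    _ = a * log a + (b - a) := by field_simp

section

variable {α : Type*} [MeasurableSpace α] {μ : Measure α}

theorem integral_mul_log_le_integral_mul_log_self {f g : α → ℝ}
    (hf : Integrable f μ) (hg : Integrable g μ) (hf0 : 0 ≤ᵐ[μ] f) (hg0 : 0 ≤ᵐ[μ] g)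
    (hgf0 : ∀ᵐ x ∂μ, g x = 0 → f x = 0) (hgf : ∫ x, g x ∂μ ≤ ∫ x, f x ∂μ)
    (hflogg : Integrable (fun x => f x * log (g x)) μ)
    (hflogf : Integrable (fun x => f x * log (f x)) μ) :
    ∫ x, f x * log (g x) ∂μ ≤ ∫ x, f x * log (f x) ∂μ := by
  have hsub : Integrable (fun x => g x - f x) μ := hg.sub hf
  calc ∫ x, f x * log (g x) ∂μ
      ≤ ∫ x, f x * log (f x) + (g x - f x) ∂μ := by
        refine integral_mono_ae hflogg (hflogf.add hsub) ?_
        filter_upwards [hf0, hg0, hgf0] with x using mul_log_le_mul_log_self_add_sub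
    _ = ∫ x, f x * log (f x) ∂μ + (∫ x, g x ∂μ - ∫ x, f x ∂μ) := by
        rw [integral_add hflogf hsub, integral_sub hg hf]
    _ ≤ ∫ x, f x * log (f x) ∂μ := by linarith

/-- The density with respect to `μ` of a member of an exponential family with uniform base on `S`.
The parameter `η` and the canonical statistic `t` enter only through the exponent
`u x = ⟨η, t x⟩`. If the normalising integral is `0`, in particular if `exp ∘ u` is not integrable
on `S`, division by zero makes this the zero function. -/
noncomputable def expFamilyDensity (μ : Measure α) (S : Set α) (u : α → ℝ) : α → ℝ :=
  S.indicator fun x => exp (u x) / ∫ y in S, exp (u y) ∂μ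

variable {S : Set α} {u : α → ℝ}

theorem expFamilyDensity_nonneg (x : α) : 0 ≤ expFamilyDensity μ S u x :=
  Set.indicator_nonneg (fun _ _ => by positivity) x

theorem expFamilyDensity_eq_zero_iff (hZ : ∫ x in S, exp (u x) ∂μ ≠ 0) {x : α} :
    expFamilyDensity μ S u x = 0 ↔ x ∉ S := by
  simp [expFamilyDensity, hZ]

theorem integral_expFamilyDensity (hS : MeasurableSet S) (hZ : ∫ x in S, exp (u x) ∂μ ≠ 0) :
    ∫ x, expFamilyDensity μ S u x ∂μ = 1 := by
  rw [expFamilyDensity, integral_indicator hS, integral_div, div_self hZ]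

theorem log_expFamilyDensity (hZ : ∫ x in S, exp (u x) ∂μ ≠ 0) {x : α} (hx : x ∈ S) :
    log (expFamilyDensity μ S u x) = u x - log (∫ y in S, exp (u y) ∂μ) := by
  rw [expFamilyDensity, Set.indicator_of_mem hx, log_div (exp_ne_zero _) hZ, log_exp]

section CrossEntropy

variable {f : α → ℝ}

theorem mul_log_expFamilyDensity_ae_eq (hZ : ∫ x in S, exp (u x) ∂μ ≠ 0)
    (hfS : ∀ᵐ x ∂μ, x ∉ S → f x = 0) :
    (fun x => f x * log (expFamilyDensity μ S u x)) =ᵐ[μ]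
      fun x => f x * u x - f x * log (∫ y in S, exp (u y) ∂μ) := by
  filter_upwards [hfS] with x hfx
  by_cases hx : x ∈ S
  · rw [log_expFamilyDensity hZ hx, mul_sub]
  · simp [hfx hx]

theorem integrable_mul_log_expFamilyDensity (hZ : ∫ x in S, exp (u x) ∂μ ≠ 0)
    (hfS : ∀ᵐ x ∂μ, x ∉ S → f x = 0) (hf : Integrable f μ)
    (hfu : Integrable (fun x => f x * u x) μ) :
    Integrable (fun x => f x * log (expFamilyDensity μ S u x)) μ :=
  (hfu.sub (hf.mul_const _)).congr (mul_log_expFamilyDensity_ae_eq hZ hfS).symm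

theorem integral_mul_log_expFamilyDensity (hZ : ∫ x in S, exp (u x) ∂μ ≠ 0)
    (hfS : ∀ᵐ x ∂μ, x ∉ S → f x = 0) (hf : Integrable f μ)
    (hfu : Integrable (fun x => f x * u x) μ) :
    ∫ x, f x * log (expFamilyDensity μ S u x) ∂μ =
      ∫ x, f x * u x ∂μ - (∫ x, f x ∂μ) * log (∫ y in S, exp (u y) ∂μ) := by
  rw [integral_congr_ae (mul_log_expFamilyDensity_ae_eq hZ hfS),
    integral_sub hfu (hf.mul_const _), integral_mul_const]

end CrossEntropy

theorem integral_mul_log_expFamilyDensity_self_le (hS : MeasurableSet S)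
    (hZ : ∫ x in S, exp (u x) ∂μ ≠ 0) {q : α → ℝ} (hq0 : 0 ≤ᵐ[μ] q) (hq1 : ∫ x, q x ∂μ = 1)
    (hqS : ∀ᵐ x ∂μ, x ∉ S → q x = 0)
    (hqu : Integrable (fun x => q x * u x) μ)
    (hpu : Integrable (fun x => expFamilyDensity μ S u x * u x) μ)
    (hmom : ∫ x, expFamilyDensity μ S u x * u x ∂μ ≤ ∫ x, q x * u x ∂μ)
    (hq_ent : Integrable (fun x => q x * log (q x)) μ) :
    ∫ x, expFamilyDensity μ S u x * log (expFamilyDensity μ S u x) ∂μ ≤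
      ∫ x, q x * log (q x) ∂μ := by
  set p := expFamilyDensity μ S u
  have hp1 : ∫ x, p x ∂μ = 1 := integral_expFamilyDensity hS hZ
  have hp : Integrable p μ := .of_integral_ne_zero (by simp [hp1])
  have hq : Integrable q μ := .of_integral_ne_zero (by simp [hq1])
  have hpS : ∀ᵐ x ∂μ, x ∉ S → p x = 0 := .of_forall fun _ => (expFamilyDensity_eq_zero_iff hZ).2
  have hqp : ∀ᵐ x ∂μ, p x = 0 → q x = 0 := by
    simpa only [p, expFamilyDensity_eq_zero_iff hZ] using hqS
  calc ∫ x, p x * log (p x) ∂μ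
      = ∫ x, p x * u x ∂μ - log (∫ x in S, exp (u x) ∂μ) := by
        rw [integral_mul_log_expFamilyDensity hZ hpS hp hpu, hp1, one_mul]
    _ ≤ ∫ x, q x * u x ∂μ - log (∫ x in S, exp (u x) ∂μ) := by gcongr
    _ = ∫ x, q x * log (p x) ∂μ := by
        rw [integral_mul_log_expFamilyDensity hZ hqS hq hqu, hq1, one_mul]
    _ ≤ ∫ x, q x * log (q x) ∂μ :=
        integral_mul_log_le_integral_mul_log_self hq hp hq0 (.of_forall expFamilyDensity_nonneg)
          hqp (hp1.trans hq1.symm).le (integrable_mul_log_expFamilyDensity hZ hqS hq hqu) hq_ent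

section Moment

variable {E : Type*} [NormedAddCommGroup E] [NormedSpace ℝ E] {t : α → E}

theorem integrable_mul_dual_apply {f : α → ℝ} (hft : Integrable (fun x => f x • t x) μ)
    (η : StrongDual ℝ E) : Integrable (fun x => f x * η (t x)) μ := by
  simpa using η.integrable_comp hft

theorem integral_mul_dual_apply [CompleteSpace E] {f : α → ℝ}
    (hft : Integrable (fun x => f x • t x) μ) (η : StrongDual ℝ E) :
    ∫ x, f x * η (t x) ∂μ = η (∫ x, f x • t x ∂μ) := by
  simpa using η.integral_comp_comm hft

theorem efu_maximises_differential_entropy_general [CompleteSpace E] (hS : MeasurableSet S)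
    (η : StrongDual ℝ E) (hZ : ∫ x in S, exp (η (t x)) ∂μ ≠ 0)
    {p : α → ℝ} (hp : p = expFamilyDensity μ S fun x => η (t x))
    {q : α → ℝ} (hq0 : 0 ≤ᵐ[μ] q) (hq1 : ∫ x, q x ∂μ = 1)
    (hqS : ∀ᵐ x ∂μ, x ∉ S → q x = 0)
    (htq : Integrable (fun x => q x • t x) μ) (htp : Integrable (fun x => p x • t x) μ)
    (hmom : ∫ x, q x • t x ∂μ = ∫ x, p x • t x ∂μ)
    (hq_ent : Integrable (fun x => q x * log (q x)) μ) :
    -∫ x, q x * log (q x) ∂μ ≤ -∫ x, p x * log (p x) ∂μ := by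
  subst hp
  refine neg_le_neg <| integral_mul_log_expFamilyDensity_self_le hS hZ hq0 hq1 hqS
    (integrable_mul_dual_apply htq η) (integrable_mul_dual_apply htp η) ?_ hq_ent
  rw [integral_mul_dual_apply htp, integral_mul_dual_apply htq, hmom]

end Moment

end

/-- Continuous version: the exponential family density with uniform base on its
support `S` maximises differential entropy among all densities supported on `S`
with the same expectation of the canonical statistic `t`. Integrals are with
respect to Lebesgue measure; `0 · log 0 = 0` holds since `Real.log 0 = 0`. -/
theorem efu_maximises_differential_entropy
    (S : Set ℝ) (hS : MeasurableSet S)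
    (d : ℕ) (t : ℝ → (Fin d → ℝ)) (ht : Measurable t) (η : Fin d → ℝ)
    (hint : IntegrableOn (fun x => Real.exp (∑ i, η i * t x i)) S)
    (Z : ℝ) (hZ : Z = ∫ x in S, Real.exp (∑ i, η i * t x i)) (hZpos : 0 < Z)
    (p : ℝ → ℝ)
    (hp : p = S.indicator (fun x => Real.exp (∑ i, η i * t x i) / Z))
    (q : ℝ → ℝ) (hqmeas : Measurable q) (hq0 : ∀ x, 0 ≤ q x)
    (hq1 : ∫ x, q x = 1)
    (hqS : ∀ᵐ x ∂(volume : Measure ℝ), x ∉ S → q x = 0)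
    (htq : Integrable (fun x => q x • t x))
    (htp : Integrable (fun x => p x • t x))
    (hmom : ∫ x, q x • t x = ∫ x, p x • t x)
    (hq_ent : Integrable (fun x => q x * Real.log (q x)))
    (hp_ent : Integrable (fun x => p x * Real.log (p x))) :
    -∫ x, q x * Real.log (q x) ≤ -∫ x, p x * Real.log (p x) := by
  subst hZ
  exact efu_maximises_differential_entropy_general hS (dotProductBilin ℝ ℝ η).toContinuousLinearMap
    hZpos.ne' hp (.of_forall hq0) hq1 hqS htq htp hmom hq_ent
end

section
/- Let K be a positive natural number and m : Fin K → ℕ a family of counts, not all zero, with total n = ∑_k m(k) > 0, and set q(k) = m(k)/n. Then, as j → ∞ along the natural numbers, (1/(j·n)) · log( (j·n)! / ∏_k (j·m(k))! ) tends to the Shannon entropy −∑_k q(k) log q(k), where 0·log 0 is interpreted as 0. -/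
open Real Filter

/-!
Write `log n! = n log n - n + r n`. In the logarithm of a multinomial coefficient with total `N` the
linear terms cancel, and what remains of the terms `n log n` is exactly `N` times the entropy of the
frequencies, by the product rule `negMulLog (x * y) = y * negMulLog x + x * negMulLog y`.
Since `0 ≤ r n ≤ 1 + log n / 2`, the error per item is `O(log N / N)`, uniformly in the counts;
continuity of the entropy gives the limit.
-/

section

open scoped Finset Nat Topology

variable {ι α : Type*}

/-- The Shannon entropy, in nats, of the weights `p` on the finite set `s`; `negMulLog 0 = 0`
implements the convention `0 log 0 = 0`. The weights are not required to sum to `1`. -/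
noncomputable def shannonEntropy (s : Finset ι) (p : ι → ℝ) : ℝ :=
  ∑ i ∈ s, negMulLog (p i)

/-- The error in the leading-order Stirling approximation `log n! ≈ n log n - n`. -/
noncomputable def stirlingRemainder (n : ℕ) : ℝ :=
  log n ! - (n * log n - n)

lemma log_factorial_eq (n : ℕ) :
    log n ! = stirlingRemainder n - negMulLog n - n := by
  simp only [stirlingRemainder, negMulLog]
  ring

lemma stirlingRemainder_zero : stirlingRemainder 0 = 0 := by
  simp [stirlingRemainder]

lemma stirlingRemainder_eq_log_stirlingSeq {n : ℕ} (hn : n ≠ 0) :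
    stirlingRemainder n = log (Stirling.stirlingSeq n) + log 2 / 2 + log n / 2 := by
  have hn' : (n : ℝ) ≠ 0 := Nat.cast_ne_zero.mpr hn
  rw [Stirling.log_stirlingSeq_formula, log_mul two_ne_zero hn', log_div hn' (exp_ne_zero 1),
    log_exp, stirlingRemainder]
  ring

lemma stirlingRemainder_nonneg (n : ℕ) : 0 ≤ stirlingRemainder n := by
  obtain rfl | hn := eq_or_ne n 0
  · exact stirlingRemainder_zero.ge
  · have hlog : 0 ≤ log n := log_natCast_nonneg n
    have hpi : 0 ≤ log (2 * π) := log_nonneg (by linarith [pi_gt_three])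
    have hStirling := Stirling.le_log_factorial_stirling hn
    rw [stirlingRemainder]
    linarith

lemma stirlingRemainder_le (n : ℕ) : stirlingRemainder n ≤ 1 + log n / 2 := by
  cases n with
  | zero => simp [stirlingRemainder_zero]
  | succ n =>
    have hanti : log (Stirling.stirlingSeq (n + 1)) ≤ log (Stirling.stirlingSeq 1) :=
      Stirling.log_stirlingSeq'_antitone n.zero_le
    have hone : log (Stirling.stirlingSeq 1) = 1 - log 2 / 2 := by
      rw [Stirling.stirlingSeq_one, log_div (exp_ne_zero 1) (by positivity), log_exp,
        log_sqrt zero_le_two]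
    rw [stirlingRemainder_eq_log_stirlingSeq n.succ_ne_zero]
    linarith

lemma stirlingRemainder_le_of_le {n N : ℕ} (h : n ≤ N) :
    stirlingRemainder n ≤ 1 + log N / 2 := by
  obtain rfl | hn := n.eq_zero_or_pos
  · rw [stirlingRemainder_zero]
    linarith [log_natCast_nonneg N]
  · have hlog : log n ≤ log N := log_le_log (by exact_mod_cast hn) (by exact_mod_cast h)
    linarith [stirlingRemainder_le n]

lemma sum_mul_shannonEntropy_div_sum (s : Finset ι) (c : ι → ℝ) (hc : ∑ i ∈ s, c i ≠ 0) :
    (∑ i ∈ s, c i) * shannonEntropy s (fun i ↦ c i / ∑ k ∈ s, c k) =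
      ∑ i ∈ s, negMulLog (c i) - negMulLog (∑ i ∈ s, c i) := by
  set N := ∑ i ∈ s, c i with hN
  have hterm (i : ι) : negMulLog (c i) = c i / N * negMulLog N + N * negMulLog (c i / N) := by
    rw [← negMulLog_mul, mul_div_cancel₀ _ hc]
  simp_rw [hterm, Finset.sum_add_distrib, ← Finset.sum_mul, ← Finset.sum_div, ← Finset.mul_sum,
    ← hN, div_self hc, shannonEntropy]
  ring

lemma log_multinomial (s : Finset ι) (c : ι → ℕ) :
    log (Nat.multinomial s c) = log (∑ i ∈ s, c i)! - ∑ i ∈ s, log (c i)! := by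
  have hfac (i : ι) : ((c i)! : ℝ) ≠ 0 := Nat.cast_ne_zero.mpr (c i).factorial_ne_zero
  have hmul : (Nat.multinomial s c : ℝ) ≠ 0 := Nat.cast_ne_zero.mpr (Nat.multinomial_pos s c).ne'
  rw [← Nat.multinomial_spec s c, Nat.cast_mul, Nat.cast_prod,
    log_mul (Finset.prod_ne_zero_iff.mpr fun i _ ↦ hfac i) hmul, log_prod fun i _ ↦ hfac i]
  ring

lemma log_multinomial_eq_shannonEntropy_add (s : Finset ι) (c : ι → ℕ) (hc : ∑ i ∈ s, c i ≠ 0) :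
    log (Nat.multinomial s c) =
      (∑ i ∈ s, c i : ℕ) * shannonEntropy s (fun i ↦ c i / (∑ k ∈ s, c k : ℕ)) +
        (stirlingRemainder (∑ i ∈ s, c i) - ∑ i ∈ s, stirlingRemainder (c i)) := by
  have hentropy := sum_mul_shannonEntropy_div_sum s (fun i ↦ (c i : ℝ)) (by exact_mod_cast hc)
  simp_rw [← Nat.cast_sum] at hentropy
  simp_rw [log_multinomial, log_factorial_eq, Finset.sum_sub_distrib, hentropy, ← Nat.cast_sum]
  ring

lemma abs_log_multinomial_sub_shannonEntropy_le (s : Finset ι) (c : ι → ℕ)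
    (hc : ∑ i ∈ s, c i ≠ 0) :
    |log (Nat.multinomial s c) -
        (∑ i ∈ s, c i : ℕ) * shannonEntropy s (fun i ↦ c i / (∑ k ∈ s, c k : ℕ))| ≤
      #s * (1 + log (∑ i ∈ s, c i : ℕ) / 2) := by
  rw [log_multinomial_eq_shannonEntropy_add s c hc, add_sub_cancel_left]
  set N := ∑ i ∈ s, c i
  have hparts_nonneg : 0 ≤ ∑ i ∈ s, stirlingRemainder (c i) :=
    Finset.sum_nonneg fun i _ ↦ stirlingRemainder_nonneg (c i)
  have hparts_le : ∑ i ∈ s, stirlingRemainder (c i) ≤ #s * (1 + log N / 2) := by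
    rw [← nsmul_eq_mul]
    exact Finset.sum_le_card_nsmul s _ _ fun i hi ↦
      stirlingRemainder_le_of_le (Finset.single_le_sum_of_canonicallyOrdered hi)
  have htotal_le : stirlingRemainder N ≤ #s * (1 + log N / 2) := by
    have hs : (1 : ℝ) ≤ #s := by
      exact_mod_cast (Finset.nonempty_of_sum_ne_zero hc).card_pos
    have hbound : 0 ≤ 1 + log N / 2 := by linarith [log_natCast_nonneg N]
    exact (stirlingRemainder_le N).trans (le_mul_of_one_le_left hbound hs)
  exact abs_sub_le_of_nonneg_of_le (stirlingRemainder_nonneg N) htotal_le hparts_nonneg hparts_le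

lemma tendsto_const_mul_one_add_half_log_div_atTop (C : ℝ) :
    Tendsto (fun x ↦ C * (1 + log x / 2) / x) atTop (𝓝 0) := by
  have hlog : Tendsto (fun x ↦ log x / x) atTop (𝓝 0) :=
    isLittleO_log_id_atTop.tendsto_div_nhds_zero
  have h := (tendsto_inv_atTop_zero.add (hlog.div_const 2)).const_mul C
  simp only [zero_div, add_zero, mul_zero] at h
  exact h.congr fun x ↦ by ring

lemma tendsto_log_multinomial_div_sub_shannonEntropy {l : Filter α} (s : Finset ι)
    (c : α → ι → ℕ) (hc : Tendsto (fun a ↦ ∑ i ∈ s, c a i) l atTop) :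
    Tendsto (fun a ↦ log (Nat.multinomial s (c a)) / (∑ i ∈ s, c a i : ℕ) -
      shannonEntropy s (fun i ↦ c a i / (∑ k ∈ s, c a k : ℕ))) l (𝓝 0) := by
  have hbound := (tendsto_const_mul_one_add_half_log_div_atTop #s).comp
    (tendsto_natCast_atTop_atTop.comp hc)
  refine squeeze_zero_norm' ?_ hbound
  filter_upwards [hc.eventually_ne_atTop 0] with a ha
  have hN : (0 : ℝ) < (∑ i ∈ s, c a i : ℕ) := by exact_mod_cast Nat.pos_of_ne_zero ha
  rw [norm_eq_abs, div_sub' hN.ne', abs_div, abs_of_pos hN]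
  exact div_le_div_of_nonneg_right (abs_log_multinomial_sub_shannonEntropy_le s (c a) ha) hN.le

lemma tendsto_sum_mul_atTop (s : Finset ι) (m : ι → ℕ) (hm : 0 < ∑ i ∈ s, m i) :
    Tendsto (fun j : ℕ ↦ ∑ i ∈ s, j * m i) atTop atTop := by
  simp_rw [← Finset.mul_sum]
  exact tendsto_id.atTop_mul_const' hm

lemma tendsto_mul_div_sum_mul (s : Finset ι) (m : ι → ℕ) (i : ι) :
    Tendsto (fun j : ℕ ↦ ((j * m i : ℕ) : ℝ) / (∑ k ∈ s, j * m k : ℕ)) atTop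
      (𝓝 (m i / (∑ k ∈ s, m k : ℕ))) := by
  refine tendsto_const_nhds.congr' ?_
  filter_upwards [eventually_ne_atTop 0] with j hj
  rw [← Finset.mul_sum, Nat.cast_mul, Nat.cast_mul, mul_div_mul_left _ _ (Nat.cast_ne_zero.mpr hj)]

theorem log_multinomial_tendsto_entropy_general {l : Filter α} (s : Finset ι)
    (c : α → ι → ℕ) (q : ι → ℝ) (hc : Tendsto (fun a ↦ ∑ i ∈ s, c a i) l atTop)
    (hq : ∀ i ∈ s, Tendsto (fun a ↦ (c a i : ℝ) / (∑ k ∈ s, c a k : ℕ)) l (𝓝 (q i))) :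
    Tendsto (fun a ↦ log (Nat.multinomial s (c a)) / (∑ i ∈ s, c a i : ℕ)) l
      (𝓝 (shannonEntropy s q)) := by
  have hentropy : Tendsto (fun a ↦ shannonEntropy s (fun i ↦ c a i / (∑ k ∈ s, c a k : ℕ))) l
      (𝓝 (shannonEntropy s q)) :=
    tendsto_finsetSum s fun i hi ↦ (continuous_negMulLog.tendsto (q i)).comp (hq i hi)
  simpa only [sub_add_cancel, zero_add] using
    (tendsto_log_multinomial_div_sub_shannonEntropy s c hc).add hentropy

end

/-- Boltzmann's combinatorial derivation of Shannon entropy: the normalised logarithm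
of the multinomial coefficient (the multiplicity of the macrostate with counts
`j·m(k)`) tends to the Shannon entropy of the frequency vector `q(k) = m(k)/n`
as `j → ∞`. The convention `0 · log 0 = 0` holds since `Real.log 0 = 0`. -/
theorem log_multinomial_tendsto_entropy
    (K : ℕ) (hK : 0 < K) (m : Fin K → ℕ) (hm : m ≠ 0)
    (n : ℕ) (hn : n = ∑ k, m k) (hnpos : 0 < n)
    (q : Fin K → ℝ) (hq : q = fun k => (m k : ℝ) / (n : ℝ)) :
    Tendsto
      (fun j : ℕ =>
        (1 / ((j : ℝ) * (n : ℝ))) *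
          Real.log (Nat.multinomial Finset.univ (fun k => j * m k) : ℝ))
      atTop (nhds (-∑ k, q k * Real.log (q k))) := by
  subst hn hq
  simpa only [shannonEntropy, negMulLog_eq_neg, Finset.sum_neg_distrib, ← Finset.mul_sum,
    Nat.cast_mul, one_div_mul_eq_div] using
    log_multinomial_tendsto_entropy_general Finset.univ (fun j k ↦ j * m k) _
      (tendsto_sum_mul_atTop _ m hnpos) fun k _ ↦ tendsto_mul_div_sum_mul _ m k
end
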